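/- arXiv:1611.03434 — 2 statements merged into one kernel-verified Lean document; each statement's English description precedes it below -/
import Mathlib

section
/- The following identities hold in Ω: w·d(ω) = −q² z ω̄ ω, and d(ω) = ((1 + q⁻⁴)/(q² − 1)) w² ω². -/
/-!
Since `d z = w ω` is closed, the Leibniz rule gives `w dω = -dw ω`, which is the first identity.
Differentiating `ω z = q² z ω` shows how `z` commutes past `dω`, with a correction term proportional
to `w ω²`. Now compute `w dω z` in two ways: by the first identity it is a multiple of `z w dω`,
because `z` only rescales when it passes `ω̄ ω`; by the correction formula it is a combination of
`w z dω` and `w² ω²`. After the disc relation is used to rewrite `w z`, the terms in `z w dω` cancel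
and a multiple of `dω` by a nonzero scalar is left.
-/

theorem mul_mul_eq_smul_of_mul_eq_smul {R A : Type*} [CommSemiring R] [Semiring A]
    [Algebra R A] {p q : R} {a b c : A}
    (ha : a * c = p • (c * a)) (hb : b * c = q • (c * b)) :
    a * b * c = (p * q) • (c * (a * b)) := by
  rw [mul_assoc, hb, mul_smul_comm, ← mul_assoc, ha, smul_mul_assoc, smul_smul, mul_comm q,
    mul_assoc]

/-- The graded Leibniz rule for a linear operator `d` with respect to a family `𝒜` of homogeneous
pieces. Only the left factor has to be homogeneous, since the right one does not affect the sign. -/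
def GradedLeibniz {R Ω : Type*} [CommRing R] [Ring Ω] [Algebra R Ω]
    (𝒜 : ℕ → Submodule R Ω) (d : Ω →ₗ[R] Ω) : Prop :=
  ∀ ⦃n : ℕ⦄ ⦃ξ : Ω⦄, ξ ∈ 𝒜 n → ∀ η : Ω, d (ξ * η) = d ξ * η + (-1 : R) ^ n • (ξ * d η)

section CommRing

variable {R Ω : Type*} [CommRing R] [Ring Ω] [Algebra R Ω]
  {𝒜 : ℕ → Submodule R Ω} {d : Ω →ₗ[R] Ω}

theorem GradedLeibniz.map_mul_of_mem_zero (hd : GradedLeibniz 𝒜 d) {a : Ω} (ha : a ∈ 𝒜 0) (η : Ω) :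
    d (a * η) = d a * η + a * d η := by
  simpa using hd ha η

theorem GradedLeibniz.map_mul_of_mem_one (hd : GradedLeibniz 𝒜 d) {ξ : Ω} (hξ : ξ ∈ 𝒜 1) (η : Ω) :
    d (ξ * η) = d ξ * η - ξ * d η := by
  simpa [sub_eq_add_neg] using hd hξ η

theorem GradedLeibniz.mul_map_eq_neg_of_map_eq_mul (hd : GradedLeibniz 𝒜 d)
    (hdd : ∀ ξ, d (d ξ) = 0) {z w ω : Ω} (hw : w ∈ 𝒜 0) (hdz : d z = w * ω) :
    w * d ω = -(d w * ω) := by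
  refine eq_neg_of_add_eq_zero_right ?_
  rw [← hd.map_mul_of_mem_zero hw, ← hdz, hdd]

theorem GradedLeibniz.mul_map_eq_neg_smul (hd : GradedLeibniz 𝒜 d)
    (hdd : ∀ ξ, d (d ξ) = 0) {Q : R} {z w ω ωb : Ω} (hw : w ∈ 𝒜 0)
    (hdz : d z = w * ω) (hdw : d w = Q • (z * ωb)) :
    w * d ω = (-Q) • (z * (ωb * ω)) := by
  rw [hd.mul_map_eq_neg_of_map_eq_mul hdd hw hdz, hdw, smul_mul_assoc, mul_assoc, neg_smul]

/-- The derivative of the relation `ω z = Q z ω`, scaled by `Q` so that no inverse occurs. -/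
theorem GradedLeibniz.smul_map_mul_eq (hd : GradedLeibniz 𝒜 d) {Q : R} {z w ω : Ω}
    (hz : z ∈ 𝒜 0) (hω : ω ∈ 𝒜 1) (hdz : d z = w * ω)
    (hωz : ω * z = Q • (z * ω)) (hwω : w * ω = Q • (ω * w)) :
    Q • (d ω * z) = Q ^ 2 • (z * d ω) + (Q ^ 2 + 1) • (w * ω ^ 2) := by
  have hdωz : d ω * z - ω * (w * ω) = Q • (w * ω ^ 2 + z * d ω) := by
    rw [← hdz, ← hd.map_mul_of_mem_one hω, hωz, map_smul, hd.map_mul_of_mem_zero hz, hdz,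
      mul_assoc, ← sq]
  have hωwω : Q • (ω * (w * ω)) = w * ω ^ 2 := by
    rw [← mul_assoc, ← smul_mul_assoc, ← hwω, mul_assoc, ← sq]
  linear_combination (norm := module) Q • hdωz + hωwω

theorem GradedLeibniz.smul_map_eq_smul_sq_mul_sq (hd : GradedLeibniz 𝒜 d)
    (hdd : ∀ ξ, d (d ξ) = 0) {Q : R} {z w ω ωb : Ω}
    (hz : z ∈ 𝒜 0) (hw : w ∈ 𝒜 0) (hω : ω ∈ 𝒜 1)
    (hwz : w * z - Q • (z * w) = (1 - Q) • (1 : Ω))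
    (hdz : d z = w * ω) (hdw : d w = Q • (z * ωb))
    (hωz : ω * z = Q • (z * ω)) (hwω : w * ω = Q • (ω * w)) (hωbz : ωb * z = Q • (z * ωb)) :
    (Q ^ 2 * (Q - 1)) • d ω = (Q ^ 2 + 1) • (w ^ 2 * ω ^ 2) := by
  have via_first_identity : w * d ω * z = Q ^ 2 • (z * (w * d ω)) := by
    rw [hd.mul_map_eq_neg_smul hdd hw hdz hdw, smul_mul_assoc, mul_assoc,
      mul_mul_eq_smul_of_mul_eq_smul hωbz hωz, mul_smul_comm, mul_smul_comm, smul_comm, ← sq]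
  have via_derivative :
      Q • (w * d ω * z) = Q ^ 2 • (w * z * d ω) + (Q ^ 2 + 1) • (w ^ 2 * ω ^ 2) := by
    simpa only [mul_add, mul_smul_comm, ← mul_assoc, ← sq] using
      congrArg (w * ·) (hd.smul_map_mul_eq hz hω hdz hωz hwω)
  have hwzdω : w * z * d ω = Q • (z * (w * d ω)) + (1 - Q) • d ω := by
    rw [sub_eq_iff_eq_add'.mp hwz, add_mul, smul_mul_assoc, smul_mul_assoc, one_mul, mul_assoc]
  linear_combination (norm := module)
    via_derivative - Q • via_first_identity + Q ^ 2 • hwzdω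

end CommRing

theorem d_omega_identities_general {K Ω : Type*} [Field K] [Ring Ω] [Algebra K Ω]
    {Q : K} (hQ0 : Q ≠ 0) (hQ1 : Q ≠ 1)
    {𝒜 : ℕ → Submodule K Ω} {d : Ω →ₗ[K] Ω} (hd : GradedLeibniz 𝒜 d) (hdd : ∀ ξ, d (d ξ) = 0)
    {z w ω ωb : Ω} (hz : z ∈ 𝒜 0) (hw : w ∈ 𝒜 0) (hω : ω ∈ 𝒜 1)
    (hwz : w * z - Q • (z * w) = (1 - Q) • (1 : Ω))
    (hdz : d z = w * ω) (hdw : d w = Q • (z * ωb))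
    (hωz : ω * z = Q • (z * ω)) (hωw : ω * w = Q⁻¹ • (w * ω)) (hωbz : ωb * z = Q • (z * ωb)) :
    w * d ω = (-Q) • (z * (ωb * ω)) ∧
      d ω = ((1 + (Q ^ 2)⁻¹) / (Q - 1)) • (w ^ 2 * ω ^ 2) := by
  have hwω : w * ω = Q • (ω * w) := by rw [hωw, smul_inv_smul₀ hQ0]
  have hQ1' : Q - 1 ≠ 0 := sub_ne_zero.mpr hQ1
  have hcoeff : (1 + (Q ^ 2)⁻¹) / (Q - 1) = (Q ^ 2 * (Q - 1))⁻¹ * (Q ^ 2 + 1) := by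
    field_simp
  refine ⟨hd.mul_map_eq_neg_smul hdd hw hdz hdw, ?_⟩
  rw [hcoeff, mul_smul, eq_inv_smul_iff₀ (mul_ne_zero (pow_ne_zero 2 hQ0) hQ1')]
  exact hd.smul_map_eq_smul_sq_mul_sq hdd hz hw hω hwz hdz hdw hωz hwω hωbz

theorem d_omega_identities
    (q : ℝ) (hq0 : 0 < q) (hq1 : q < 1)
    {A : Type*} [Ring A] [Algebra ℂ A]
    (z w : A)
    (hzw : w * z - ((q : ℂ) ^ 2) • (z * w) = ((1 : ℂ) - (q : ℂ) ^ 2) • (1 : A))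
    (x : A) (hx : x = 1 - z * w)
    (σ : A ≃ₐ[ℂ] A) (hσz : σ z = ((q : ℂ) ^ 2) • z)
    (hσw : σ w = (((q : ℂ) ^ 2)⁻¹) • w)
    (D : A →ₗ[ℂ] A)
    (hD : ∀ a b : A, D (a * b) = D a * σ b + a * D b)
    (hDz : D z = w) (hDw : D w = 0)
    (Db : A →ₗ[ℂ] A)
    (hDb : ∀ a b : A, Db (a * b) = Db a * σ b + a * Db b)
    (hDbz : Db z = 0) (hDbw : Db w = ((q : ℂ) ^ 2) • z)
    {Ω : Type*} [Ring Ω] [Algebra ℂ Ω]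
    (𝒜 : ℕ → Submodule ℂ Ω)
    (hmul : ∀ {m n : ℕ} {ξ η : Ω}, ξ ∈ 𝒜 m → η ∈ 𝒜 n → ξ * η ∈ 𝒜 (m + n))
    (ι : A →ₐ[ℂ] Ω) (hι : Function.Injective ι)
    (hι0 : ∀ a : A, ι a ∈ 𝒜 0) (hι0' : ∀ u ∈ 𝒜 0, ∃ a : A, ι a = u)
    (d : Ω →ₗ[ℂ] Ω)
    (hdeg : ∀ {n : ℕ} {ξ : Ω}, ξ ∈ 𝒜 n → d ξ ∈ 𝒜 (n + 1))
    (hdd : ∀ ξ : Ω, d (d ξ) = 0)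
    (hLeib : ∀ {n : ℕ} {ξ : Ω}, ξ ∈ 𝒜 n → ∀ η : Ω,
      d (ξ * η) = d ξ * η + ((-1 : ℂ) ^ n) • (ξ * d η))
    (ω ωb : Ω) (hω : ω ∈ 𝒜 1) (hωb : ωb ∈ 𝒜 1)
    (hωcomm : ∀ a : A, ω * ι a = ι (σ a) * ω)
    (hωbcomm : ∀ a : A, ωb * ι a = ι (σ a) * ωb)
    (hda : ∀ a : A, d (ι a) = ι (D a) * ω + ι (Db a) * ωb)
    :
    ι w * d ω = (-((q : ℂ) ^ 2)) • (ι z * (ωb * ω)) ∧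
    d ω = ((1 + ((q : ℂ) ^ 4)⁻¹) / ((q : ℂ) ^ 2 - 1)) • (ι (w ^ 2) * ω ^ 2) := by
  have hQ0 : (q : ℂ) ^ 2 ≠ 0 := mod_cast (pow_pos hq0 2).ne'
  have hQ1 : (q : ℂ) ^ 2 ≠ 1 := mod_cast (pow_lt_one₀ hq0.le hq1 two_ne_zero).ne
  have hwz := congrArg ι hzw
  simp only [map_sub, map_smul, map_mul, map_one] at hwz
  simpa only [map_pow, ← pow_mul] using
    d_omega_identities_general hQ0 hQ1 (fun _ _ hξ => hLeib hξ) hdd (hι0 z) (hι0 w) hω hwz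
      (by simp [hda, hDz, hDbz]) (by simp [hda, hDw, hDbw]) (by simp [hωcomm, hσz])
      (by simp [hωcomm, hσw]) (by simp [hωbcomm, hσz])
end

section
/- The following identity holds in Ω²: ω² = −(q⁸/(q⁴ + 1)) z⁴ (ω̄ ω + q⁴ ω ω̄); consequently ω² (and, by conjugation, ω̄²) lies in the A-module generated by v. -/
/-!
Differentiating `dz = w ω` and the relations `ω z = q² z ω`, `ω w = q⁻² w ω` gives three equations
in degree two. They express `dω` as a multiple of `w² ω²`, and consistency with the rule for
`dω z` forces `z w ω² = ω²`: `ω²` is supported on the boundary circle `z w = 1`. Hence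
`z³ w³ ω² = ω²`, which inverts the formula for `w³ ω²` in terms of `z ω ω̄` and yields `ω²`.

Comparing the expressions for `w dω` and `dω w` gives `z (ω̄ ω + q⁶ ω ω̄) = 0`. The calculus is
self-dual under `q ↦ q⁻¹`, `z ↔ w`, `ω ↔ ω̄` (up to scaling the one-forms), so the same element is
killed by `w`, hence vanishes since `1` lies in the left ideal generated by `z` and `w`. Thus
`v = ω ω̄`, and `ω²`, `ω̄²` are multiples of `v`.
-/

section

variable {K R : Type*} [Field K] [Ring R] [Algebra K R]

/-- The quantum disc relation with parameter `p`, where `p` plays the role of `q²` and `w` that of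
the adjoint of `z`. -/
structure IsQuantumDisc (p : K) (z w : R) : Prop where
  rel : w * z - p • (z * w) = (1 - p) • (1 : R)

/-- The relations of the twisted differential calculus on the quantum disc, with basic one-forms
`ω` and `ωb` (for `ω̄`), in an ambient ring which contains the disc and its forms. The grading is
encoded by the signs in the Leibniz rules, which are required only for the four generators. -/
structure IsQuantumDiscCalculus (p : K) (z w ω ωb : R) (d : R →ₗ[K] R) : Prop
    extends IsQuantumDisc p z w where
  ω_mul_z : ω * z = p • (z * ω)
  ω_mul_w : ω * w = p⁻¹ • (w * ω)
  ωb_mul_z : ωb * z = p • (z * ωb)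
  ωb_mul_w : ωb * w = p⁻¹ • (w * ωb)
  d_d (u : R) : d (d u) = 0
  d_z : d z = w * ω
  d_w : d w = p • (z * ωb)
  d_z_mul (u : R) : d (z * u) = d z * u + z * d u
  d_w_mul (u : R) : d (w * u) = d w * u + w * d u
  d_ω_mul (u : R) : d (ω * u) = d ω * u - ω * d u
  d_ωb_mul (u : R) : d (ωb * u) = d ωb * u - ωb * d u

namespace IsQuantumDisc

variable {p : K} {z w T : R}

theorem symm (h : IsQuantumDisc p z w) (hp0 : p ≠ 0) : IsQuantumDisc p⁻¹ w z where
  rel := by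
    linear_combination (norm := skip) (-p⁻¹) • h.rel
    match_scalars <;> field_simp <;> ring

theorem w_mul_z_mul (h : IsQuantumDisc p z w) (u : R) :
    w * (z * u) = p • (z * (w * u)) + (1 - p) • u := by
  have := congrArg (· * u) h.rel
  simp only [sub_mul, smul_mul_assoc, mul_assoc, one_mul] at this
  exact sub_eq_iff_eq_add'.1 this

theorem eq_zero_of_mul_eq_zero (h : IsQuantumDisc p z w) (hp1 : p ≠ 1) {u : R}
    (hw : w * u = 0) (hwz : w * (z * u) = 0) : u = 0 := by
  rw [h.w_mul_z_mul, hw, mul_zero, smul_zero, zero_add] at hwz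
  exact (smul_eq_zero_iff_right (sub_ne_zero.2 hp1.symm)).1 hwz

theorem z_mul_w_mul_eq_self (h : IsQuantumDisc p z w) (hp1 : p ≠ 1) {c : K} (hc : c ≠ 0)
    (hTz : T * z = c • (z * T)) (hT : z * (w * (w * T)) = w * T) : z * (w * T) = T := by
  have hzT : z * (w * (w * (z * T))) = w * (z * T) := by
    have := congrArg (· * z) hT
    simp only [mul_assoc, hTz, mul_smul_comm] at this
    exact smul_right_injective R hc this
  have hcomm : w * (z * (z * (w * T))) = z * (w * (w * (z * T))) := by
    simp only [h.w_mul_z_mul, mul_add, mul_smul_comm]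
  refine sub_eq_zero.1 (h.eq_zero_of_mul_eq_zero hp1 ?_ ?_)
  · rw [mul_sub, h.w_mul_z_mul, hT]
    module
  · rw [mul_sub, mul_sub, hcomm, hzT, sub_self]

theorem z_mul_w_mul_w_mul_eq (h : IsQuantumDisc p z w) (hp0 : p ≠ 0) (hT : z * (w * T) = T) :
    z * (w * (w * T)) = w * T := by
  have hwT := h.w_mul_z_mul (w * T)
  rw [hT] at hwT
  refine smul_right_injective R hp0 ?_
  linear_combination (norm := module) -hwT

theorem z_pow_mul_w_pow_mul_eq_self (h : IsQuantumDisc p z w) (hp0 : p ≠ 0) (n : ℕ)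
    (hT : z * (w * T) = T) : z ^ n * (w ^ n * T) = T := by
  induction n generalizing T with
  | zero => simp
  | succ n ih =>
    rw [pow_succ' z, pow_succ w, mul_assoc, mul_assoc, ih (h.z_mul_w_mul_w_mul_eq hp0 hT), hT]

end IsQuantumDisc

namespace IsQuantumDiscCalculus

variable {p : K} {z w ω ωb : R} {d : R →ₗ[K] R}

theorem symm (h : IsQuantumDiscCalculus p z w ω ωb d) (hp0 : p ≠ 0) :
    IsQuantumDiscCalculus p⁻¹ w z (p • ωb) (p • ω) d where
  toIsQuantumDisc := h.toIsQuantumDisc.symm hp0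
  ω_mul_z := by rw [smul_mul_assoc, h.ωb_mul_w, mul_smul_comm, smul_comm]
  ω_mul_w := by rw [smul_mul_assoc, h.ωb_mul_z, mul_smul_comm, inv_inv]
  ωb_mul_z := by rw [smul_mul_assoc, h.ω_mul_w, mul_smul_comm, smul_comm]
  ωb_mul_w := by rw [smul_mul_assoc, h.ω_mul_z, mul_smul_comm, inv_inv]
  d_d := h.d_d
  d_z := by rw [h.d_w, mul_smul_comm]
  d_w := by rw [h.d_z, mul_smul_comm, inv_smul_smul₀ hp0]
  d_z_mul := h.d_w_mul
  d_w_mul := h.d_z_mul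
  d_ω_mul u := by simp only [smul_mul_assoc, map_smul, h.d_ωb_mul, smul_sub]
  d_ωb_mul u := by simp only [smul_mul_assoc, map_smul, h.d_ω_mul, smul_sub]

theorem of_graded {A : Type*} [Ring A] [Algebra K A] {z w : A}
    (hzw : w * z - p • (z * w) = (1 - p) • (1 : A))
    {σ D Db : A → A} (hσz : σ z = p • z) (hσw : σ w = p⁻¹ • w)
    (hDz : D z = w) (hDw : D w = 0) (hDbz : Db z = 0) (hDbw : Db w = p • z)
    {𝒜 : ℕ → Submodule K R} {ι : A →ₐ[K] R} (hι0 : ∀ a, ι a ∈ 𝒜 0) (hdd : ∀ u, d (d u) = 0)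
    (hLeib : ∀ {n : ℕ} {ξ : R}, ξ ∈ 𝒜 n → ∀ η : R,
      d (ξ * η) = d ξ * η + ((-1 : K) ^ n) • (ξ * d η))
    (hω : ω ∈ 𝒜 1) (hωb : ωb ∈ 𝒜 1)
    (hωcomm : ∀ a, ω * ι a = ι (σ a) * ω) (hωbcomm : ∀ a, ωb * ι a = ι (σ a) * ωb)
    (hda : ∀ a, d (ι a) = ι (D a) * ω + ι (Db a) * ωb) :
    IsQuantumDiscCalculus p (ι z) (ι w) ω ωb d where
  rel := by simpa only [map_sub, map_mul, map_smul, map_one] using congrArg ι hzw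
  ω_mul_z := by rw [hωcomm, hσz, map_smul, smul_mul_assoc]
  ω_mul_w := by rw [hωcomm, hσw, map_smul, smul_mul_assoc]
  ωb_mul_z := by rw [hωbcomm, hσz, map_smul, smul_mul_assoc]
  ωb_mul_w := by rw [hωbcomm, hσw, map_smul, smul_mul_assoc]
  d_d := hdd
  d_z := by rw [hda, hDz, hDbz, map_zero, zero_mul, add_zero]
  d_w := by rw [hda, hDw, hDbw, map_zero, zero_mul, zero_add, map_smul, smul_mul_assoc]
  d_z_mul u := by simpa using hLeib (hι0 z) u
  d_w_mul u := by simpa using hLeib (hι0 w) u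
  d_ω_mul u := by simpa [sub_eq_add_neg] using hLeib hω u
  d_ωb_mul u := by simpa [sub_eq_add_neg] using hLeib hωb u

theorem ω_sq_mul_z (h : IsQuantumDiscCalculus p z w ω ωb d) :
    ω ^ 2 * z = p ^ 2 • (z * ω ^ 2) := by
  rw [sq, mul_assoc, h.ω_mul_z, mul_smul_comm, ← mul_assoc, h.ω_mul_z, smul_mul_assoc, smul_smul,
    mul_assoc, sq]

theorem ω_sq_mul_w (h : IsQuantumDiscCalculus p z w ω ωb d) :
    ω ^ 2 * w = p⁻¹ ^ 2 • (w * ω ^ 2) := by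
  rw [sq, mul_assoc, h.ω_mul_w, mul_smul_comm, ← mul_assoc, h.ω_mul_w, smul_mul_assoc, smul_smul,
    mul_assoc, sq]

theorem ωb_mul_ω_mul_z (h : IsQuantumDiscCalculus p z w ω ωb d) :
    ωb * ω * z = p ^ 2 • (z * (ωb * ω)) := by
  rw [mul_assoc, h.ω_mul_z, mul_smul_comm, ← mul_assoc, h.ωb_mul_z, smul_mul_assoc, smul_smul,
    mul_assoc, sq]

theorem w_mul_d_ω (h : IsQuantumDiscCalculus p z w ω ωb d) :
    w * d ω = -(p • (z * (ωb * ω))) := by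
  have := h.d_d z
  rw [h.d_z, h.d_w_mul, h.d_w, smul_mul_assoc, mul_assoc] at this
  exact eq_neg_of_add_eq_zero_right this

theorem d_ω_mul_z (h : IsQuantumDiscCalculus p z w ω ωb d) :
    d ω * z = p • (z * d ω) + (p + p⁻¹) • (w * ω ^ 2) := by
  have := congrArg d h.ω_mul_z
  rw [h.d_ω_mul, map_smul, h.d_z_mul, h.d_z, ← mul_assoc ω, h.ω_mul_w, smul_mul_assoc,
    mul_assoc, ← sq] at this
  linear_combination (norm := module) this

theorem d_ω_mul_w (h : IsQuantumDiscCalculus p z w ω ωb d) :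
    d ω * w = p ^ 2 • (z * (ω * ωb)) := by
  have := congrArg d h.ω_mul_w
  rw [h.d_ω_mul, map_smul, h.d_w_mul, h.w_mul_d_ω, h.d_w, mul_smul_comm, ← mul_assoc ω, h.ω_mul_z,
    smul_mul_assoc, smul_mul_assoc, mul_assoc, mul_assoc] at this
  linear_combination (norm := module) this

theorem d_ω_eq (h : IsQuantumDiscCalculus p z w ω ωb d) (hp0 : p ≠ 0) (hp1 : p ≠ 1) :
    d ω = -((p ^ 2 + 1) / (p ^ 2 * (1 - p))) • (w * (w * ω ^ 2)) := by
  have hp1' : 1 - p ≠ 0 := sub_ne_zero.2 hp1.symm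
  have hleft : w * (d ω * z) = -(p ^ 3 • (z * (z * (ωb * ω)))) := by
    rw [← mul_assoc, h.w_mul_d_ω, neg_mul, smul_mul_assoc, mul_assoc, h.ωb_mul_ω_mul_z,
      mul_smul_comm, smul_smul, ← pow_succ']
  have hright : w * (d ω * z) = -(p ^ 3 • (z * (z * (ωb * ω)))) + (p * (1 - p)) • d ω
      + (p + p⁻¹) • (w * (w * ω ^ 2)) := by
    rw [h.d_ω_mul_z, mul_add, mul_smul_comm, mul_smul_comm, h.w_mul_z_mul, h.w_mul_d_ω, mul_neg,
      mul_smul_comm]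
    module
  linear_combination (norm := skip) (p * (1 - p))⁻¹ • (hleft - hright)
  match_scalars <;> field_simp <;> ring

theorem z_mul_w_mul_ω_sq (h : IsQuantumDiscCalculus p z w ω ωb d) (hp0 : p ≠ 0)
    (hp2 : p ^ 2 + 1 ≠ 0) (hp3 : p ^ 3 ≠ 1) : z * (w * ω ^ 2) = ω ^ 2 := by
  have hp1 : p ≠ 1 := fun hp ↦ hp3 (by rw [hp, one_pow])
  have hp1' : 1 - p ≠ 0 := sub_ne_zero.2 hp1.symm
  have hp3' : 1 - p ^ 3 ≠ 0 := sub_ne_zero.2 hp3.symm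
  refine h.z_mul_w_mul_eq_self hp1 (pow_ne_zero 2 hp0) h.ω_sq_mul_z ?_
  have hz := h.d_ω_mul_z
  simp only [h.d_ω_eq hp0 hp1, smul_mul_assoc, mul_assoc, h.ω_sq_mul_z, mul_smul_comm,
    h.w_mul_z_mul, mul_add] at hz
  linear_combination (norm := skip) (p * (1 - p) / ((p ^ 2 + 1) * (1 - p ^ 3))) • hz
  match_scalars <;> field_simp <;> ring

theorem z_mul_ωb_mul_ω (h : IsQuantumDiscCalculus p z w ω ωb d) (hp0 : p ≠ 0) (hp1 : p ≠ 1) :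
    z * (ωb * ω) = ((p ^ 2 + 1) / (p ^ 3 * (1 - p))) • (w ^ 3 * ω ^ 2) := by
  have hp1' : 1 - p ≠ 0 := sub_ne_zero.2 hp1.symm
  have hw := h.w_mul_d_ω
  rw [h.d_ω_eq hp0 hp1, mul_smul_comm] at hw
  rw [pow_three w, mul_assoc, mul_assoc]
  linear_combination (norm := skip) p⁻¹ • hw
  match_scalars <;> field_simp <;> ring

theorem z_mul_ω_mul_ωb (h : IsQuantumDiscCalculus p z w ω ωb d) (hp0 : p ≠ 0) (hp1 : p ≠ 1) :
    z * (ω * ωb) = -((p ^ 2 + 1) / (p ^ 6 * (1 - p))) • (w ^ 3 * ω ^ 2) := by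
  have hp1' : 1 - p ≠ 0 := sub_ne_zero.2 hp1.symm
  have hw := h.d_ω_mul_w
  simp only [h.d_ω_eq hp0 hp1, smul_mul_assoc, mul_assoc, h.ω_sq_mul_w, mul_smul_comm] at hw
  rw [pow_three w, mul_assoc, mul_assoc]
  linear_combination (norm := skip) -(p ^ 2)⁻¹ • hw
  match_scalars <;> field_simp <;> ring

theorem z_mul_ωb_mul_ω_add (h : IsQuantumDiscCalculus p z w ω ωb d) (hp0 : p ≠ 0) (hp1 : p ≠ 1) :
    z * (ωb * ω + p ^ 3 • (ω * ωb)) = 0 := by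
  have hp1' : 1 - p ≠ 0 := sub_ne_zero.2 hp1.symm
  rw [mul_add, mul_smul_comm, h.z_mul_ωb_mul_ω hp0 hp1, h.z_mul_ω_mul_ωb hp0 hp1]
  match_scalars
  field_simp
  ring

theorem w_mul_ωb_mul_ω_add (h : IsQuantumDiscCalculus p z w ω ωb d) (hp0 : p ≠ 0) (hp1 : p ≠ 1) :
    w * (ωb * ω + p ^ 3 • (ω * ωb)) = 0 := by
  have hdual := (h.symm hp0).z_mul_ωb_mul_ω_add (inv_ne_zero hp0) (inv_ne_one.2 hp1)
  simp only [smul_mul_assoc, mul_smul_comm, mul_add] at hdual ⊢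
  linear_combination (norm := skip) p • hdual
  match_scalars <;> field_simp <;> ring

theorem ωb_mul_ω (h : IsQuantumDiscCalculus p z w ω ωb d) (hp0 : p ≠ 0) (hp1 : p ≠ 1) :
    ωb * ω = -(p ^ 3 • (ω * ωb)) :=
  eq_neg_of_add_eq_zero_left <| h.eq_zero_of_mul_eq_zero hp1 (h.w_mul_ωb_mul_ω_add hp0 hp1) <| by
    rw [h.z_mul_ωb_mul_ω_add hp0 hp1, mul_zero]

theorem ωb_mul_ω_add_smul (h : IsQuantumDiscCalculus p z w ω ωb d) (hp0 : p ≠ 0) (hp1 : p ≠ 1)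
    (c : K) : ωb * ω + c • (ω * ωb) = (c - p ^ 3) • (ω * ωb) := by
  rw [h.ωb_mul_ω hp0 hp1]
  module

theorem ω_sq (h : IsQuantumDiscCalculus p z w ω ωb d) (hp0 : p ≠ 0) (hp2 : p ^ 2 + 1 ≠ 0)
    (hp3 : p ^ 3 ≠ 1) :
    ω ^ 2 = (p ^ 6 * (p - 1) / (p ^ 2 + 1)) • (z ^ 4 * (ω * ωb)) := by
  have hp1 : p ≠ 1 := fun hp ↦ hp3 (by rw [hp, one_pow])
  have hp1' : 1 - p ≠ 0 := sub_ne_zero.2 hp1.symm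
  have hfix := h.z_pow_mul_w_pow_mul_eq_self hp0 3 (h.z_mul_w_mul_ω_sq hp0 hp2 hp3)
  rw [pow_succ z 3, mul_assoc, h.z_mul_ω_mul_ωb hp0 hp1, mul_smul_comm, hfix]
  match_scalars
  field_simp
  ring

theorem ωb_sq (h : IsQuantumDiscCalculus p z w ω ωb d) (hp0 : p ≠ 0) (hp2 : p ^ 2 + 1 ≠ 0)
    (hp3 : p ^ 3 ≠ 1) :
    ωb ^ 2 = ((p - 1) / (p ^ 2 * (p ^ 2 + 1))) • (w ^ 4 * (ω * ωb)) := by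
  have hp1 : p ≠ 1 := fun hp ↦ hp3 (by rw [hp, one_pow])
  have hp2' : p⁻¹ ^ 2 + 1 = (p ^ 2 + 1) / p ^ 2 := by field_simp; ring
  have hdual := (h.symm hp0).ω_sq (inv_ne_zero hp0)
    (by rw [hp2']; exact div_ne_zero hp2 (pow_ne_zero 2 hp0)) (by rwa [inv_pow, inv_ne_one])
  simp only [smul_pow, smul_mul_assoc, mul_smul_comm, h.ωb_mul_ω hp0 hp1, mul_neg, hp2'] at hdual
  linear_combination (norm := skip) (p ^ 2)⁻¹ • hdual
  match_scalars <;> field_simp <;> ring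

end IsQuantumDiscCalculus

theorem omega_sq_formula_general {q : K} (hq0 : q ≠ 0) (hq4 : q ^ 4 + 1 ≠ 0) (hq6 : q ^ 6 ≠ 1)
    {z w ω ωb v : R} {d : R →ₗ[K] R} (h : IsQuantumDiscCalculus (q ^ 2) z w ω ωb d)
    (hv : v = ((q ^ 6)⁻¹ / (q ^ 2 - 1)) • (ωb * ω + q ^ 8 • (ω * ωb))) :
    ω ^ 2 = (-(q ^ 8 / (q ^ 4 + 1))) • (z ^ 4 * (ωb * ω + q ^ 4 • (ω * ωb))) ∧
      ω ^ 2 = (q ^ 12 * (q ^ 2 - 1) / (q ^ 4 + 1)) • (z ^ 4 * v) ∧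
      ωb ^ 2 = ((q ^ 2 - 1) / (q ^ 4 * (q ^ 4 + 1))) • (w ^ 4 * v) := by
  have hp0 : q ^ 2 ≠ 0 := pow_ne_zero 2 hq0
  have hp2 : (q ^ 2) ^ 2 + 1 ≠ 0 := by rwa [← pow_mul]
  have hp3 : (q ^ 2) ^ 3 ≠ 1 := by rwa [← pow_mul]
  have hp1 : q ^ 2 ≠ 1 := fun hp ↦ hp3 (by rw [hp, one_pow])
  have hp1' : q ^ 2 - 1 ≠ 0 := sub_ne_zero.2 hp1
  have hv' : v = ω * ωb := by
    rw [hv, h.ωb_mul_ω_add_smul hp0 hp1]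
    match_scalars
    field_simp
  have hω := h.ω_sq hp0 hp2 hp3
  have hωb := h.ωb_sq hp0 hp2 hp3
  simp only [← pow_mul, Nat.reduceMul] at hω hωb
  rw [hv']
  refine ⟨?_, hω, hωb⟩
  rw [hω, h.ωb_mul_ω_add_smul hp0 hp1, mul_smul_comm]
  match_scalars
  field_simp
  ring

end

theorem omega_sq_formula
    (q : ℝ) (hq0 : 0 < q) (hq1 : q < 1)
    {A : Type*} [Ring A] [Algebra ℂ A]
    (z w : A)
    (hzw : w * z - ((q : ℂ) ^ 2) • (z * w) = ((1 : ℂ) - (q : ℂ) ^ 2) • (1 : A))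
    (x : A) (hx : x = 1 - z * w)
    (σ : A ≃ₐ[ℂ] A) (hσz : σ z = ((q : ℂ) ^ 2) • z)
    (hσw : σ w = (((q : ℂ) ^ 2)⁻¹) • w)
    (D : A →ₗ[ℂ] A)
    (hD : ∀ a b : A, D (a * b) = D a * σ b + a * D b)
    (hDz : D z = w) (hDw : D w = 0)
    (Db : A →ₗ[ℂ] A)
    (hDb : ∀ a b : A, Db (a * b) = Db a * σ b + a * Db b)
    (hDbz : Db z = 0) (hDbw : Db w = ((q : ℂ) ^ 2) • z)
    {Ω : Type*} [Ring Ω] [Algebra ℂ Ω]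
    (𝒜 : ℕ → Submodule ℂ Ω)
    (hmul : ∀ {m n : ℕ} {ξ η : Ω}, ξ ∈ 𝒜 m → η ∈ 𝒜 n → ξ * η ∈ 𝒜 (m + n))
    (ι : A →ₐ[ℂ] Ω) (hι : Function.Injective ι)
    (hι0 : ∀ a : A, ι a ∈ 𝒜 0) (hι0' : ∀ u ∈ 𝒜 0, ∃ a : A, ι a = u)
    (d : Ω →ₗ[ℂ] Ω)
    (hdeg : ∀ {n : ℕ} {ξ : Ω}, ξ ∈ 𝒜 n → d ξ ∈ 𝒜 (n + 1))
    (hdd : ∀ ξ : Ω, d (d ξ) = 0)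
    (hLeib : ∀ {n : ℕ} {ξ : Ω}, ξ ∈ 𝒜 n → ∀ η : Ω,
      d (ξ * η) = d ξ * η + ((-1 : ℂ) ^ n) • (ξ * d η))
    (ω ωb : Ω) (hω : ω ∈ 𝒜 1) (hωb : ωb ∈ 𝒜 1)
    (hωcomm : ∀ a : A, ω * ι a = ι (σ a) * ω)
    (hωbcomm : ∀ a : A, ωb * ι a = ι (σ a) * ωb)
    (hda : ∀ a : A, d (ι a) = ι (D a) * ω + ι (Db a) * ωb)
    (v : Ω)
    (hv : v = ((((q : ℂ) ^ 6)⁻¹) / ((q : ℂ) ^ 2 - 1)) • (ωb * ω + ((q : ℂ) ^ 8) • (ω * ωb)))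
    :
    ω ^ 2 = (-((q : ℂ) ^ 8 / ((q : ℂ) ^ 4 + 1))) • (ι (z ^ 4) * (ωb * ω + ((q : ℂ) ^ 4) • (ω * ωb))) ∧
    (∃ a : A, ω ^ 2 = ι a * v) ∧ (∃ a : A, ωb ^ 2 = ι a * v) := by
  obtain ⟨hformula, hωv, hωbv⟩ := omega_sq_formula_general (q := (q : ℂ))
    (by exact_mod_cast hq0.ne') (by norm_cast; positivity)
    (by exact_mod_cast (pow_lt_one₀ hq0.le hq1 (by decide)).ne)
    (.of_graded hzw hσz hσw hDz hDw hDbz hDbw hι0 hdd hLeib hω hωb hωcomm hωbcomm hda) hv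
  simp only [← map_pow, ← smul_mul_assoc, ← map_smul] at hωv hωbv
  exact ⟨by rw [map_pow]; exact hformula, ⟨_, hωv⟩, ⟨_, hωbv⟩⟩
end
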